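/- Let K be a field, s ∈ ℤ^m, let P ∈ K[x]^{m×m} be in −s-weak Popov form, let δ ∈ ℕ^m be the −s-pivot degree of P, and assume s ≥ δ entrywise. Let R ∈ K[x]^{m×m} be a −δ-weak Popov form of P and let U ∈ K[x]^{m×m} be the unimodular matrix with U·P = R. Set d = (s − δ, δ) ∈ ℤ^{2m} (concatenation) and F = [P; −I_m] ∈ K[x]^{2m×m} (P stacked above minus the identity). Then: (i) the −d-pivot profile of the m×2m matrix [U R] is (m + j, δ_j) for j = 1,…,m; (ii) [U R] is in −d-weak Popov form with rdeg_{−d}([U R]) = 0 and cdeg([U R]) ≤ d entrywise; (iii) [U R] is a basis of the left kernel of F. -/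

import Mathlib

open Polynomial Matrix

/-- The degree of a polynomial, viewed in `ℤ ∪ {-∞}`. -/
noncomputable def degZ {K : Type*} [Field K] (p : K[X]) : WithBot ℤ :=
  p.degree.map fun a : ℕ => (a : ℤ)

/-- The `s`-row degree of a (row) vector of polynomials. -/
noncomputable def rdegRow {K : Type*} [Field K] {ν : Type*} [Fintype ν]
    (s : ν → ℤ) (v : ν → K[X]) : WithBot ℤ :=
  Finset.univ.sup fun j => degZ (v j) + (s j : WithBot ℤ)

/-- The `s`-row degree of a polynomial matrix. -/
noncomputable def rdeg {K : Type*} [Field K] {ι ν : Type*} [Fintype ν]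
    (s : ν → ℤ) (P : Matrix ι ν K[X]) : ι → WithBot ℤ :=
  fun i => rdegRow s (P i)

/-- The `t`-column degree of a polynomial matrix. -/
noncomputable def cdeg {K : Type*} [Field K] {ι ν : Type*} [Fintype ι]
    (t : ι → ℤ) (P : Matrix ι ν K[X]) : ν → WithBot ℤ :=
  fun j => Finset.univ.sup fun i => degZ (P i j) + (t i : WithBot ℤ)

/-- Coefficient of integer degree `d` of a polynomial (0 if `d < 0`). -/
noncomputable def coeffZ {K : Type*} [Field K] (p : K[X]) (d : ℤ) : K :=
  if 0 ≤ d then p.coeff d.toNat else 0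

/-- The `s`-leading matrix of a polynomial matrix. -/
noncomputable def lm {K : Type*} [Field K] {ι ν : Type*} [Fintype ν]
    (s : ν → ℤ) (P : Matrix ι ν K[X]) : Matrix ι ν K :=
  Matrix.of fun i j =>
    (rdeg s P i).recBotCoe 0 fun t => coeffZ (P i j) (t - s j)

/-- `P` is in `s`-reduced form: its `s`-leading matrix has full row rank,
i.e. its rows are linearly independent over `K`. -/
def IsReducedForm {K : Type*} [Field K] {ι ν : Type*} [Fintype ν]
    (s : ν → ℤ) (P : Matrix ι ν K[X]) : Prop :=
  LinearIndependent K fun i => lm s P i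

open Classical in
/-- The `s`-pivot index of a row vector: the largest column index where the
`s`-row degree is attained (with a nonzero entry); `⊥` for the zero row. -/
noncomputable def piv {K : Type*} [Field K] {ν : Type*} [Fintype ν] [LinearOrder ν]
    (s : ν → ℤ) (v : ν → K[X]) : WithBot ν :=
  (Finset.univ.filter fun j => v j ≠ 0 ∧ degZ (v j) + (s j : WithBot ℤ) = rdegRow s v).max

/-- The `s`-pivot degree of a row vector (junk value `0` for the zero row). -/
noncomputable def pivDeg {K : Type*} [Field K] {ν : Type*} [Fintype ν] [LinearOrder ν]
    (s : ν → ℤ) (v : ν → K[X]) : ℕ :=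
  ((piv s v).map fun j => (v j).natDegree).unbotD 0

/-- `P` is in `s`-weak Popov form: no zero row and strictly increasing `s`-pivot indices. -/
def IsWeakPopov {K : Type*} [Field K] {ι ν : Type*} [Fintype ν] [LinearOrder ν] [Preorder ι]
    (s : ν → ℤ) (P : Matrix ι ν K[X]) : Prop :=
  (∀ i, piv s (P i) ≠ ⊥) ∧ StrictMono fun i => piv s (P i)

/-- `P` is in `s`-unordered weak Popov form: no zero row and pairwise distinct
`s`-pivot indices. -/
def IsUWeakPopov {K : Type*} [Field K] {ι ν : Type*} [Fintype ν] [LinearOrder ν]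
    (s : ν → ℤ) (P : Matrix ι ν K[X]) : Prop :=
  (∀ i, piv s (P i) ≠ ⊥) ∧ Function.Injective fun i => piv s (P i)

/-- `P` is in `s`-Popov form: `s`-weak Popov, monic pivots, and each pivot entry
has degree strictly larger than the other entries of its column. -/
def IsPopov {K : Type*} [Field K] {ι ν : Type*} [Fintype ν] [LinearOrder ν] [Preorder ι]
    (s : ν → ℤ) (P : Matrix ι ν K[X]) : Prop :=
  IsWeakPopov s P ∧
    ∀ i (j : ν), piv s (P i) = (j : WithBot ν) →
      (P i j).Monic ∧ ∀ i', i' ≠ i → (P i' j).degree < (P i j).degree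

/-- The row space of a polynomial matrix. -/
noncomputable def rowSpace {K : Type*} [Field K] {ι ν : Type*} (P : Matrix ι ν K[X]) :
    Submodule K[X] (ν → K[X]) :=
  Submodule.span K[X] (Set.range fun i => P i)

/-- The rows of `B` form a basis of the module `M`. -/
def IsBasisOf {K : Type*} [Field K] {ι ν : Type*} (B : Matrix ι ν K[X])
    (M : Submodule K[X] (ν → K[X])) : Prop :=
  LinearIndependent K[X] (fun i => B i) ∧
    Submodule.span K[X] (Set.range fun i => B i) = M

/-- The left kernel of a polynomial matrix. -/
noncomputable def leftKernel {K : Type*} [Field K] {ι ν : Type*} [Fintype ι]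
    (F : Matrix ι ν K[X]) : Submodule K[X] (ι → K[X]) :=
  LinearMap.ker F.vecMulLinear


/-- Explicit pivot condition in terms of natural degrees. -/
def PivAt {K : Type*} [Field K] {n : ℕ} (a : Fin n → ℤ) (v : Fin n → K[X]) (j : Fin n) : Prop :=
  v j ≠ 0 ∧ ∀ k, v k ≠ 0 →
    ((v k).natDegree : ℤ) + a k ≤ (v j).natDegree + a j ∧
    (j < k → ((v k).natDegree : ℤ) + a k < (v j).natDegree + a j)

lemma degZ_of_ne {K : Type*} [Field K] {p : K[X]} (hp : p ≠ 0) :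
    degZ p = ((p.natDegree : ℤ) : WithBot ℤ) := by
  unfold degZ
  rw [Polynomial.degree_eq_natDegree hp]
  rfl

lemma degZ_zero' {K : Type*} [Field K] : degZ (0 : K[X]) = ⊥ := by
  simp [degZ]

lemma rdegRow_of_pivAt {K : Type*} [Field K] {n : ℕ} {a : Fin n → ℤ} {v : Fin n → K[X]}
    {j : Fin n} (h : PivAt a v j) :
    rdegRow a v = (((v j).natDegree + a j : ℤ) : WithBot ℤ) := by
  unfold rdegRow
  apply le_antisymm
  · apply Finset.sup_le
    intro k _
    by_cases hk : v k = 0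
    · rw [hk, degZ_zero', WithBot.bot_add]; exact bot_le
    · rw [degZ_of_ne hk]
      exact_mod_cast (h.2 k hk).1
  · refine le_trans ?_ (Finset.le_sup (Finset.mem_univ j))
    rw [degZ_of_ne h.1]
    exact_mod_cast le_refl _

lemma piv_of_pivAt {K : Type*} [Field K] {n : ℕ} {a : Fin n → ℤ} {v : Fin n → K[X]}
    {j : Fin n} (h : PivAt a v j) : piv a v = (j : WithBot (Fin n)) := by
  classical
  have hr := rdegRow_of_pivAt h
  unfold piv
  apply le_antisymm
  · apply Finset.max_le
    intro k hk
    simp only [Finset.mem_filter, Finset.mem_univ, true_and] at hk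
    obtain ⟨hk0, hk1⟩ := hk
    rw [hr, degZ_of_ne hk0] at hk1
    have hk2 : ((v k).natDegree : ℤ) + a k = (v j).natDegree + a j := by exact_mod_cast hk1
    by_contra hlt
    have : j < k := by simpa using hlt
    have := (h.2 k hk0).2 this
    omega
  · apply Finset.le_max
    simp only [Finset.mem_filter, Finset.mem_univ, true_and]
    refine ⟨h.1, ?_⟩
    rw [hr, degZ_of_ne h.1]
    rfl

lemma pivAt_of_piv {K : Type*} [Field K] {n : ℕ} {a : Fin n → ℤ} {v : Fin n → K[X]}
    {j : Fin n} (h : piv a v = (j : WithBot (Fin n))) : PivAt a v j := by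
  classical
  unfold piv at h
  have hm := Finset.mem_of_max h
  simp only [Finset.mem_filter, Finset.mem_univ, true_and] at hm
  obtain ⟨h0, h1⟩ := hm
  rw [degZ_of_ne h0] at h1
  refine ⟨h0, fun k hk => ?_⟩
  have hle : degZ (v k) + (a k : WithBot ℤ) ≤ rdegRow a v :=
    Finset.le_sup (f := fun j => degZ (v j) + (a j : WithBot ℤ)) (Finset.mem_univ k)
  rw [← h1, degZ_of_ne hk] at hle
  have hle' : ((v k).natDegree : ℤ) + a k ≤ (v j).natDegree + a j := by exact_mod_cast hle
  refine ⟨hle', fun hjk => lt_of_le_of_ne hle' fun he => ?_⟩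
  have hmem : k ∈ Finset.univ.filter
      (fun j => v j ≠ 0 ∧ degZ (v j) + (a j : WithBot ℤ) = rdegRow a v) := by
    simp only [Finset.mem_filter, Finset.mem_univ, true_and]
    refine ⟨hk, ?_⟩
    rw [← h1, degZ_of_ne hk]
    exact_mod_cast he
  have := Finset.le_max hmem
  rw [h] at this
  have : k ≤ j := by exact_mod_cast this
  exact absurd hjk (not_lt.mpr this)

lemma pivDeg_of_pivAt {K : Type*} [Field K] {n : ℕ} {a : Fin n → ℤ} {v : Fin n → K[X]}
    {j : Fin n} (h : PivAt a v j) : pivDeg a v = (v j).natDegree := by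
  unfold pivDeg
  rw [piv_of_pivAt h]
  rfl

lemma pivAt_of_weakPopov {K : Type*} [Field K] {m : ℕ} {a : Fin m → ℤ}
    {P : Matrix (Fin m) (Fin m) K[X]} (h : IsWeakPopov a P) (i : Fin m) : PivAt a (P i) i := by
  choose f hf using fun i => WithBot.ne_bot_iff_exists.mp (h.1 i)
  have hmono : StrictMono f := by
    intro x y hxy
    have := h.2 hxy
    simp only [← hf] at this
    exact_mod_cast this
  have hsurj : Function.Surjective f := Finite.surjective_of_injective hmono.injective
  have hid : f = id := (StrictMono.range_inj hmono strictMono_id).mp (by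
    rw [hsurj.range_eq]; simp)
  apply pivAt_of_piv
  rw [← hf, hid]; rfl

lemma key_pivot {K : Type*} [Field K] {m : ℕ} {a : Fin m → ℤ}
    {P : Matrix (Fin m) (Fin m) K[X]} (h : ∀ i, PivAt a (P i) i) (u : Fin m → K[X])
    (hu : u ≠ 0) : ∃ k, u k ≠ 0 ∧ (u ᵥ* P) k ≠ 0 ∧
      ((u ᵥ* P) k).natDegree = (u k).natDegree + (P k k).natDegree ∧
      ∀ j, u j ≠ 0 → ((u j).natDegree : ℤ) + ((P j j).natDegree + a j) ≤
        (u k).natDegree + ((P k k).natDegree + a k) := by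
  classical
  obtain ⟨j0, hj0⟩ : ∃ j, u j ≠ 0 := by
    by_contra hc; push Not at hc; exact hu (funext hc)
  obtain ⟨k, hk, hmax⟩ := Finset.exists_max_image (Finset.univ.filter fun j => u j ≠ 0)
    (fun j => toLex (((u j).natDegree : ℤ) + ((P j j).natDegree + a j), j))
    ⟨j0, by simpa using hj0⟩
  simp only [Finset.mem_filter, Finset.mem_univ, true_and] at hk hmax
  have hmax' : ∀ j, u j ≠ 0 → ((u j).natDegree : ℤ) + ((P j j).natDegree + a j) ≤
        (u k).natDegree + ((P k k).natDegree + a k) ∧ (k < j →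
        ((u j).natDegree : ℤ) + ((P j j).natDegree + a j) <
        (u k).natDegree + ((P k k).natDegree + a k)) := by
    intro j hj
    have := hmax j hj
    rw [Prod.Lex.toLex_le_toLex] at this
    rcases this with h1 | ⟨h1, h2⟩
    · exact ⟨h1.le, fun _ => h1⟩
    · exact ⟨h1.le, fun hkj => absurd hkj (not_lt.mpr h2)⟩
  have hsum : (u ᵥ* P) k = u k * P k k + ∑ j ∈ Finset.univ.erase k, u j * P j k := by
    exact (Finset.add_sum_erase _ (fun j => u j * P j k) (Finset.mem_univ k)).symm
  have hne : u k * P k k ≠ 0 := mul_ne_zero hk (h k).1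
  have hlt : (∑ j ∈ Finset.univ.erase k, u j * P j k).degree < (u k * P k k).degree := by
    refine lt_of_le_of_lt (Polynomial.degree_sum_le _ _) ?_
    rw [Finset.sup_lt_iff (by simpa [bot_lt_iff_ne_bot] using hne)]
    intro j hj
    have hjk : j ≠ k := Finset.ne_of_mem_erase hj
    by_cases hz : u j * P j k = 0
    · rw [hz, Polynomial.degree_zero]
      exact bot_lt_iff_ne_bot.mpr (by simpa using hne)
    · have h1 : u j ≠ 0 := left_ne_zero_of_mul hz
      have h2 : P j k ≠ 0 := right_ne_zero_of_mul hz
      rw [Polynomial.degree_eq_natDegree hz, Polynomial.degree_eq_natDegree hne, Nat.cast_lt,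
        Polynomial.natDegree_mul h1 h2, Polynomial.natDegree_mul hk (h k).1]
      have h3 := hmax' j h1
      have h4 := (h j).2 k h2
      rcases lt_or_gt_of_ne hjk with hl | hl
      · have h5 := h4.2 hl
        have h6 := h3.1
        omega
      · have h5 := h4.1
        have h6 := h3.2 hl
        omega
  have hdeg := Polynomial.degree_add_eq_left_of_degree_lt hlt
  have hnd := Polynomial.natDegree_eq_of_degree_eq hdeg
  rw [← hsum] at hdeg hnd
  refine ⟨k, hk, ?_, ?_, fun j hj => (hmax' j hj).1⟩
  · intro h0
    rw [h0, Polynomial.degree_zero] at hdeg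
    exact hne (Polynomial.degree_eq_bot.mp hdeg.symm)
  · rw [hnd, Polynomial.natDegree_mul hk (h k).1]

lemma natDegree_det {K : Type*} [Field K] {m : ℕ} {a : Fin m → ℤ}
    {P : Matrix (Fin m) (Fin m) K[X]} (h : ∀ i, PivAt a (P i) i) :
    P.det.natDegree = ∑ i, (P i i).natDegree := by
  classical
  have hne : ∏ i, P i i ≠ 0 := Finset.prod_ne_zero_iff.mpr fun i _ => (h i).1
  have hsum : P.det = ∏ i, P i i + ∑ σ ∈ Finset.univ.erase (1 : Equiv.Perm (Fin m)),
      Equiv.Perm.sign σ • ∏ i, P (σ i) i := by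
    rw [Matrix.det_apply, ← Finset.add_sum_erase _ _ (Finset.mem_univ (1 : Equiv.Perm (Fin m)))]
    simp
  have hlt : (∑ σ ∈ Finset.univ.erase (1 : Equiv.Perm (Fin m)),
      Equiv.Perm.sign σ • ∏ i, P (σ i) i).degree < (∏ i, P i i).degree := by
    refine lt_of_le_of_lt (Polynomial.degree_sum_le _ _) ?_
    rw [Finset.sup_lt_iff (bot_lt_iff_ne_bot.mpr (by simpa using hne))]
    intro σ hσ
    have hσ1 : σ ≠ 1 := Finset.ne_of_mem_erase hσ
    have hsg : (Equiv.Perm.sign σ • ∏ i, P (σ i) i).degree = (∏ i, P (σ i) i).degree := by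
      rcases Int.units_eq_one_or (Equiv.Perm.sign σ) with hs | hs <;> rw [hs] <;> simp
    rw [hsg]
    by_cases hz : ∏ i, P (σ i) i = 0
    · rw [hz, Polynomial.degree_zero]
      exact bot_lt_iff_ne_bot.mpr (by simpa using hne)
    · have hz' := Finset.prod_ne_zero_iff.mp hz
      rw [Polynomial.degree_eq_natDegree hz, Polynomial.degree_eq_natDegree hne, Nat.cast_lt,
        Polynomial.natDegree_prod _ _ hz', Polynomial.natDegree_prod _ _ (fun i _ => (h i).1)]
      obtain ⟨i0, hi0⟩ : ∃ i, σ i < i := by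
        by_contra hc
        push Not at hc
        apply hσ1
        have hs : ∑ i, ((i : Fin m) : ℕ) = ∑ i, ((σ i : Fin m) : ℕ) :=
          (Equiv.sum_comp σ (fun i => (i : ℕ))).symm
        have := (Finset.sum_eq_sum_iff_of_le (fun i _ => Fin.le_def.mp (hc i))).mp hs
        ext i
        exact (this i (Finset.mem_univ i)).symm
      have hl : ∑ i, (((P (σ i) i).natDegree : ℤ) + a i) <
          ∑ i, (((P (σ i) (σ i)).natDegree : ℤ) + a (σ i)) :=
        Finset.sum_lt_sum (fun i _ => ((h (σ i)).2 i (hz' i (Finset.mem_univ i))).1)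
          ⟨i0, Finset.mem_univ _, ((h (σ i0)).2 i0 (hz' i0 (Finset.mem_univ i0))).2 hi0⟩
      rw [Equiv.sum_comp σ (fun i => ((P i i).natDegree : ℤ) + a i),
        Finset.sum_add_distrib, Finset.sum_add_distrib] at hl
      have : ∑ i, ((P (σ i) i).natDegree : ℤ) < ∑ i, ((P i i).natDegree : ℤ) := by linarith
      exact_mod_cast this
  rw [hsum, Polynomial.natDegree_add_eq_left_of_degree_lt hlt,
    Polynomial.natDegree_prod _ _ (fun i _ => (h i).1)]

/-- Lemma 5.1: for `P` in `(−s)`-weak Popov form with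
`(−s)`-pivot degree `δ ≤ s`, a `(−δ)`-weak Popov form `R` of `P` and the
unimodular `U` with `U·P = R`: with `d = (s−δ, δ)` and `F = [P; −I]`, the
matrix `[U R]` has `(−d)`-pivot profile `(m+j, δ_j)`, is in `(−d)`-weak Popov
form with `rdeg_{−d}([U R]) = 0` and `cdeg([U R]) ≤ d`, and is a basis of the
left kernel of `F`. -/
theorem normalize_kernel_basis {K : Type*} [Field K] {m : ℕ}
    (s : Fin m → ℤ) (P : Matrix (Fin m) (Fin m) K[X])
    (hP : IsWeakPopov (fun i => -s i) P)
    (δ : Fin m → ℕ) (hδ : ∀ i, pivDeg (fun j => -s j) (P i) = δ i)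
    (hsδ : ∀ i, (δ i : ℤ) ≤ s i)
    (R U : Matrix (Fin m) (Fin m) K[X])
    (hRbasis : IsBasisOf R (rowSpace P))
    (hRwp : IsWeakPopov (fun i => -(δ i : ℤ)) R)
    (hU : IsUnit U.det) (hUP : U * P = R) :
    let d : Fin (m + m) → ℤ := Fin.append (fun i => s i - δ i) (fun i => (δ i : ℤ))
    let F : Matrix (Fin (m + m)) (Fin m) K[X] :=
      (Matrix.fromRows P (-1)).submatrix (⇑(finSumFinEquiv (m := m) (n := m)).symm) id
    let UR : Matrix (Fin m) (Fin (m + m)) K[X] := Matrix.of fun i => Fin.append (U i) (R i)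
    (∀ j : Fin m,
        piv (fun c => -d c) (UR j) = ((Fin.natAdd m j : Fin (m + m)) : WithBot (Fin (m + m))) ∧
        pivDeg (fun c => -d c) (UR j) = δ j) ∧
    IsWeakPopov (fun c => -d c) UR ∧
    (∀ i, rdeg (fun c => -d c) UR i = ((0 : ℤ) : WithBot ℤ)) ∧
    (∀ j : Fin (m + m), cdeg (fun _ => (0 : ℤ)) UR j ≤ ((d j : ℤ) : WithBot ℤ)) ∧
    IsBasisOf UR (leftKernel F) := by
  intro d F UR
  have eUl : ∀ i k, UR i (Fin.castAdd m k) = U i k := fun i k => Fin.append_left _ _ k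
  have eUr : ∀ i k, UR i (Fin.natAdd m k) = R i k := fun i k => Fin.append_right _ _ k
  have edl : ∀ k, d (Fin.castAdd m k) = s k - δ k := fun k => Fin.append_left _ _ k
  have edr : ∀ k, d (Fin.natAdd m k) = δ k := fun k => Fin.append_right _ _ k
  have hPp : ∀ i, PivAt (fun j => -s j) (P i) i := pivAt_of_weakPopov hP
  have hRp : ∀ i, PivAt (fun j => -(δ j : ℤ)) (R i) i := pivAt_of_weakPopov hRwp
  have hδ' : ∀ i, (P i i).natDegree = δ i := fun i => by
    rw [← hδ i, pivDeg_of_pivAt (hPp i)]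
  have hrow : ∀ i, U i ᵥ* P = R i := fun i => by rw [← hUP]; rfl
  have hUne : ∀ i, U i ≠ 0 := fun i h0 => by
    have := hrow i
    rw [h0, Matrix.zero_vecMul] at this
    exact (hRp i).1 (by rw [← this]; rfl)
  -- each row has nonnegative shifted degree
  have hge : ∀ i, δ i ≤ (R i i).natDegree := by
    intro i
    obtain ⟨k, hk, hpk, hdeg, -⟩ := key_pivot hPp (U i) (hUne i)
    rw [hrow] at hpk hdeg
    have := ((hRp i).2 k hpk).1
    rw [hδ'] at hdeg
    push_cast [hdeg] at this
    omega
  have hdetR : R.det.natDegree = ∑ i, (R i i).natDegree := natDegree_det hRp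
  have hdetP : P.det.natDegree = ∑ i, (P i i).natDegree := natDegree_det hPp
  have hdet : R.det.natDegree = P.det.natDegree := by
    rw [← hUP, Matrix.det_mul]
    obtain ⟨c, hc, hcU⟩ := Polynomial.isUnit_iff.mp hU
    rw [← hcU, Polynomial.natDegree_C_mul hc.ne_zero]
  have heq : ∀ i, (R i i).natDegree = δ i := by
    have hs : ∑ i, δ i = ∑ i, (R i i).natDegree := by
      rw [← hdetR, hdet, hdetP]
      exact Finset.sum_congr rfl fun i _ => (hδ' i).symm
    have := (Finset.sum_eq_sum_iff_of_le (fun i _ => hge i)).mp hs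
    exact fun i => (this i (Finset.mem_univ i)).symm
  have hRle : ∀ i k, R i k ≠ 0 → (R i k).natDegree ≤ δ k := by
    intro i k hk
    have := ((hRp i).2 k hk).1
    rw [heq] at this
    simp only at this
    omega
  have hUle : ∀ i j, U i j ≠ 0 → ((U i j).natDegree : ℤ) ≤ s j - δ j := by
    intro i j hj
    obtain ⟨k, hk, hpk, hdeg, hmax⟩ := key_pivot hPp (U i) (hUne i)
    rw [hrow] at hpk hdeg
    have h1 := hRle i k hpk
    have h2 := hmax j hj
    have h3 := hsδ k
    rw [hδ'] at hdeg h2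
    rw [hδ'] at h2
    omega
  have hURp : ∀ i, PivAt (fun c => -d c) (UR i) (Fin.natAdd m i) := by
    intro i
    have e1 := eUr i i
    have e2 := edr i
    refine ⟨by rw [e1]; exact (hRp i).1, fun k => ?_⟩
    simp only [e1, e2, heq]
    refine Fin.addCases (fun k => ?_) (fun k => ?_) k
    · have e3 := eUl i k
      have e4 := edl k
      rw [e3, e4]
      intro hk
      have := hUle i k hk
      refine ⟨by omega, fun hlt => absurd hlt ?_⟩
      rw [Fin.lt_def]
      simp
      omega
    · have e3 := eUr i k
      have e4 := edr k
      rw [e3, e4]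
      intro hk
      have := (hRp i).2 k hk
      rw [heq] at this
      refine ⟨this.1, fun hlt => this.2 ?_⟩
      rw [Fin.lt_def, Fin.val_natAdd, Fin.val_natAdd] at hlt
      rw [Fin.lt_def]
      omega
  have hdegpos : ∀ i, (UR i (Fin.natAdd m i)).natDegree = δ i := fun i => by
    rw [eUr, heq]
  refine ⟨fun j => ⟨piv_of_pivAt (hURp j), ?_⟩, ⟨fun i => ?_, ?_⟩, fun i => ?_, fun j => ?_, ?_, ?_⟩
  · rw [pivDeg_of_pivAt (hURp j), hdegpos]
  · rw [piv_of_pivAt (hURp i)]; exact WithBot.coe_ne_bot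
  · intro i j hij
    simp only [piv_of_pivAt (hURp _)]
    rw [WithBot.coe_lt_coe]
    rw [Fin.lt_def] at hij
    rw [Fin.lt_def, Fin.val_natAdd, Fin.val_natAdd]
    omega
  · unfold rdeg
    rw [rdegRow_of_pivAt (hURp i), hdegpos]
    simp only [edr]
    simp
  · unfold cdeg
    apply Finset.sup_le
    intro i _
    by_cases h0 : UR i j = 0
    · rw [h0, degZ_zero', WithBot.bot_add]; exact bot_le
    · rw [degZ_of_ne h0]
      have h1 := ((hURp i).2 j h0).1
      rw [hdegpos] at h1
      have e2 := edr i
      simp only [e2] at h1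
      have : ((UR i j).natDegree : ℤ) + 0 ≤ d j := by omega
      exact_mod_cast this
  · have hli := hRbasis.1
    refine LinearIndependent.of_comp (LinearMap.funLeft K[X] K[X] (Fin.natAdd m)) ?_
    convert hli using 1
    ext i k : 2
    exact eUr i k
  · have hF : ∀ p : Fin (m + m) → K[X], p ∈ leftKernel F ↔
        (fun i => p (Fin.castAdd m i)) ᵥ* P = fun i => p (Fin.natAdd m i) := by
      intro p
      unfold leftKernel
      rw [LinearMap.mem_ker, Matrix.vecMulLinear_apply]
      have : p ᵥ* F = (fun i => p (Fin.castAdd m i)) ᵥ* P - fun i => p (Fin.natAdd m i) := by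
        ext1 k
        simp only [Matrix.vecMul, dotProduct, Fin.sum_univ_add, Pi.sub_apply]
        have f1 : ∀ i, F (Fin.castAdd m i) k = P i k := fun i => by
          simp only [F, Matrix.submatrix_apply, finSumFinEquiv_symm_apply_castAdd]; rfl
        have f2 : ∀ i, F (Fin.natAdd m i) k = (-1 : Matrix (Fin m) (Fin m) K[X]) i k := fun i => by
          simp only [F, Matrix.submatrix_apply, finSumFinEquiv_symm_apply_natAdd]; rfl
        simp only [f1, f2, Matrix.neg_apply, Matrix.one_apply, mul_neg, mul_ite, mul_one,
          mul_zero, Finset.sum_neg_distrib, Finset.sum_ite_eq', Finset.mem_univ, if_true,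
          sub_eq_add_neg]
      rw [this, sub_eq_zero]
    apply le_antisymm
    · rw [Submodule.span_le]
      rintro _ ⟨i, rfl⟩
      rw [SetLike.mem_coe, hF]
      have e1 : (fun k => UR i (Fin.castAdd m k)) = U i := by ext1 k; exact eUl i k
      have e2 : (fun k => UR i (Fin.natAdd m k)) = R i := by ext1 k; exact eUr i k
      rw [e1, e2, hrow]
    · intro p hp
      rw [hF] at hp
      set u : Fin m → K[X] := fun i => p (Fin.castAdd m i) with hu
      have hw : (u ᵥ* U⁻¹) ᵥ* U = u := by
        rw [Matrix.vecMul_vecMul, Matrix.nonsing_inv_mul _ hU, Matrix.vecMul_one]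
      have hw2 : (u ᵥ* U⁻¹) ᵥ* R = fun i => p (Fin.natAdd m i) := by
        rw [← hUP, ← Matrix.vecMul_vecMul, hw, hp]
      have : p = ∑ i, (u ᵥ* U⁻¹) i • UR i := by
        ext1 k
        simp only [Finset.sum_apply, Pi.smul_apply, smul_eq_mul]
        refine Fin.addCases (fun k => ?_) (fun k => ?_) k
        · simp only [eUl]
          exact (congrFun hw k).symm
        · simp only [eUr]
          exact (congrFun hw2 k).symm
      rw [this]
      exact Submodule.sum_mem _ fun i _ =>
        Submodule.smul_mem _ _ (Submodule.subset_span ⟨i, rfl⟩)
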